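/- Fix (μ, a, b) ∈ ℝ³ and define f^λ : ℝ^{n+1} → ℝ^{n+1} by f^λ_i(p) = (1/2)·(log(Σ_{j=1}^n A_{ji} e^{p_j} + e^{a + p_{n+1}}) − log(Σ_{k=1}^n A_{ik} e^{−p_k} + e^{−b − p_{n+1}})) for i ≤ n, and f^λ_{n+1}(p) = (1/2)·(log(Σ_{j=1}^n e^{−b + p_j}) − log(Σ_{k=1}^n e^{a − p_k})). If A ≠ 0, then for every initial point p⁰ ∈ ℝ^{n+1}, the iterates p^{k+1} = f^λ(p^k) converge to a global minimizer of the function p ↦ θ(p, μ, a, b); moreover the set of global minimizers of this function is nonempty and equals { p* + c𝟙 : c ∈ ℝ } for any one minimizer p*, where 𝟙 is the all-ones vector of ℝ^{n+1}. -/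

import Mathlib

open BigOperators Filter

/-- The effective HOTS dual function. -/
noncomputable def effDual {n : ℕ} (A : Matrix (Fin n) (Fin n) ℝ) (α : ℝ)
    (p : Fin (n + 1) → ℝ) (μ a b : ℝ) : ℝ :=
  (∑ i : Fin n, ∑ j : Fin n, A i j * Real.exp (p i.castSucc - p j.castSucc + μ))
    + (∑ i : Fin n, Real.exp (-b - p (Fin.last n) + p i.castSucc + μ))
    + (∑ j : Fin n, Real.exp (a + p (Fin.last n) - p j.castSucc + μ))
    - (1 - α) * a - μ + (1 - α) * b

/-- The fixed-multiplier map `f^λ` for `λ = (μ, a, b)` (it only depends on `a`, `b`). -/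
noncomputable def fLam {n : ℕ} (A : Matrix (Fin n) (Fin n) ℝ) (a b : ℝ)
    (p : Fin (n + 1) → ℝ) : Fin (n + 1) → ℝ :=
  Fin.lastCases
    ((1 / 2) * (Real.log (∑ j : Fin n, Real.exp (-b + p j.castSucc))
      - Real.log (∑ k : Fin n, Real.exp (a - p k.castSucc))))
    (fun i => (1 / 2) *
      (Real.log ((∑ j : Fin n, A j i * Real.exp (p j.castSucc))
          + Real.exp (a + p (Fin.last n)))
        - Real.log ((∑ k : Fin n, A i k * Real.exp (-(p k.castSucc)))
          + Real.exp (-b - p (Fin.last n)))))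

/-!
Border `A` with one extra index: row `e ^ a`, column `e ^ (-b)`, corner `0`. Up to a positive factor
and an additive constant, `θ(·, μ, a, b)` is then the total mass `∑ M i j * e ^ (p i - p j)` of the
diagonally rescaled bordered matrix `M`. Its stationarity condition in coordinate `i` reads
`e ^ (p i) * ∑ M i k * e ^ (-p k) = e ^ (-p i) * ∑ M j i * e ^ (p j)`, and `f^λ` solves it for
`p i` with both sums frozen, so minimizers are fixed points. This map is monotone and commutes with
adding constants, hence it is nonexpansive for the sup norm. When `M + Mᵀ` is primitive, an iterate
of it is strongly monotone, and then preserves the distance between two points only if they differ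
by a constant. This gives uniqueness of fixed points up to constants; it also gives convergence,
because the distance to a fixed point cannot decrease any further at a cluster point of an orbit.
-/

section ClusterPoints

open Topology

lemma apply_iterate_eq_of_tendsto_subseq {X : Type*} [TopologicalSpace X] {f : X → X}
    (hf : Continuous f) {V : X → ℝ} (hV : Continuous V) (hle : ∀ x, V (f x) ≤ V x) {x r : X}
    {φ : ℕ → ℕ} (hφ : Tendsto φ atTop atTop)
    (hr : Tendsto (fun k => f^[φ k] x) atTop (𝓝 r)) (N : ℕ) : V (f^[N] r) = V r := by
  have hanti : Antitone fun k => V (f^[k] x) := antitone_nat_of_succ_le fun k => by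
    rw [Function.iterate_succ_apply']
    exact hle _
  have hlim : Tendsto (fun k => V (f^[k] x)) atTop (𝓝 (V r)) :=
    (tendsto_iff_tendsto_subseq_of_antitone hanti hφ).2 ((hV.tendsto r).comp hr)
  have hshift : Tendsto (fun k => V (f^[N + φ k] x)) atTop (𝓝 (V (f^[N] r))) := by
    simp only [Function.iterate_add_apply]
    exact ((hV.comp (hf.iterate N)).tendsto r).comp hr
  have hNφ : Tendsto (fun k => N + φ k) atTop atTop :=
    tendsto_atTop_mono (fun k => Nat.le_add_left (φ k) N) hφ
  exact tendsto_nhds_unique hshift (hlim.comp hNφ)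

lemma tendsto_iterate_of_tendsto_subseq {X : Type*} [PseudoMetricSpace X] {f : X → X}
    (hf : LipschitzWith 1 f) {x r : X} (hfix : Function.IsFixedPt f r) {φ : ℕ → ℕ}
    (hφ : Tendsto φ atTop atTop) (hr : Tendsto (fun k => f^[φ k] x) atTop (𝓝 r)) :
    Tendsto (fun k => f^[k] x) atTop (𝓝 r) := by
  have hanti : Antitone fun k => dist (f^[k] x) r := antitone_nat_of_succ_le fun k => by
    rw [Function.iterate_succ_apply']
    simpa [hfix.eq] using hf.dist_le_mul (f^[k] x) r
  exact tendsto_iff_dist_tendsto_zero.2 <|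
    (tendsto_iff_tendsto_subseq_of_antitone hanti hφ).2 (tendsto_iff_dist_tendsto_zero.1 hr)

lemma exists_tendsto_subseq_iterate {X : Type*} [PseudoMetricSpace X] [ProperSpace X]
    {f : X → X} (hf : LipschitzWith 1 f) {q : X} (hq : Function.IsFixedPt f q) (x : X) :
    ∃ r, ∃ φ : ℕ → ℕ, Tendsto φ atTop atTop ∧ Tendsto (fun k => f^[φ k] x) atTop (𝓝 r) := by
  have hball : ∀ k, f^[k] x ∈ Metric.closedBall q (dist x q) := fun k => by
    simpa [(hq.iterate k).eq] using (hf.iterate k).dist_le_mul x q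
  obtain ⟨r, -, φ, hφ, hr⟩ := (isCompact_closedBall q (dist x q)).tendsto_subseq hball
  exact ⟨r, φ, hφ.tendsto_atTop, hr⟩

end ClusterPoints

section Topical

open Topology

variable {ι : Type*}

/-- A topical map of `ι → ℝ`: monotone and additively homogeneous, the class of maps studied in
nonlinear Perron–Frobenius theory. -/
structure IsTopical (f : (ι → ℝ) → ι → ℝ) : Prop where
  monotone : Monotone f
  map_add_const : ∀ p c, f (p + fun _ => c) = f p + fun _ => c

/-- Eventual strong monotonicity in the sense of monotone dynamical systems: a fixed iterate sends
`p ≤ q`, `p ≠ q` to two points whose coordinates are all strictly ordered. -/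
def EventuallyStrongMono (f : (ι → ℝ) → ι → ℝ) : Prop :=
  ∃ N, ∀ ⦃p q⦄, p < q → StrongLT (f^[N] p) (f^[N] q)

lemma le_add_const_dist [Fintype ι] (p q : ι → ℝ) : p ≤ q + fun _ => dist p q := fun i =>
  sub_le_iff_le_add'.1 ((le_abs_self _).trans (dist_le_pi_dist p q i))

namespace IsTopical

variable {f : (ι → ℝ) → ι → ℝ}

lemma iterate (hf : IsTopical f) (N : ℕ) : IsTopical f^[N] where
  monotone := hf.monotone.iterate N
  map_add_const p c :=
    Function.Commute.iterate_left (g := fun p => p + fun _ => c)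
      (fun p => hf.map_add_const p c) N p

lemma isFixedPt_add_const (hf : IsTopical f) {q : ι → ℝ} (hq : Function.IsFixedPt f q) (c : ℝ) :
    Function.IsFixedPt f (q + fun _ => c) := by
  rw [Function.IsFixedPt, hf.map_add_const, hq.eq]

lemma eq_add_const_of_le (hf : IsTopical f) (hlt : ∀ ⦃p q⦄, p < q → StrongLT (f p) (f q))
    {p q : ι → ℝ} {c : ℝ} (hle : p ≤ q + fun _ => c) {i : ι} (hi : f p i = f q i + c) :
    p = q + fun _ => c := by
  by_contra hne
  have hlt_i := hlt (hle.lt_of_ne hne) i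
  rw [hf.map_add_const, hi] at hlt_i
  exact lt_irrefl _ hlt_i

lemma lipschitzWith [Fintype ι] (hf : IsTopical f) : LipschitzWith 1 f := by
  have hsub : ∀ p q i, f p i - f q i ≤ dist p q := fun p q i => by
    have h := hf.monotone (le_add_const_dist p q) i
    rw [hf.map_add_const] at h
    exact sub_le_iff_le_add'.2 h
  refine LipschitzWith.mk_one fun p q => (dist_pi_le_iff dist_nonneg).2 fun i => ?_
  exact abs_sub_le_iff.2 ⟨hsub p q i, dist_comm p q ▸ hsub q p i⟩

lemma eq_add_const_of_dist_eq [Fintype ι] (hf : IsTopical f)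
    (hlt : ∀ ⦃p q⦄, p < q → StrongLT (f p) (f q)) {p q : ι → ℝ}
    (hd : dist (f p) (f q) = dist p q) : ∃ c : ℝ, p = q + fun _ => c := by
  rcases (dist_nonneg (x := p) (y := q)).eq_or_lt with h0 | hpos
  · exact ⟨0, by simpa [← Pi.zero_def] using dist_eq_zero.1 h0.symm⟩
  obtain ⟨i, hi⟩ := ((dist_pi_eq_iff hpos).1 hd).1
  rcases eq_or_eq_neg_of_abs_eq hi with hi | hi
  · exact ⟨dist p q, hf.eq_add_const_of_le hlt (le_add_const_dist p q) (sub_eq_iff_eq_add'.1 hi)⟩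
  · have hq : q = p + fun _ => dist p q :=
      hf.eq_add_const_of_le hlt (dist_comm q p ▸ le_add_const_dist q p) (i := i) (by linarith)
    refine ⟨-dist p q, funext fun j => ?_⟩
    have hj := congrFun hq j
    simp only [Pi.add_apply] at hj ⊢
    linarith

lemma eq_add_const_of_isFixedPt [Finite ι] (hf : IsTopical f) (hs : EventuallyStrongMono f)
    {p q : ι → ℝ} (hp : Function.IsFixedPt f p) (hq : Function.IsFixedPt f q) :
    ∃ c : ℝ, p = q + fun _ => c := by
  cases nonempty_fintype ι
  obtain ⟨N, hN⟩ := hs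
  exact (hf.iterate N).eq_add_const_of_dist_eq hN (by rw [(hp.iterate N).eq, (hq.iterate N).eq])

theorem exists_tendsto_iterate [Finite ι] (hf : IsTopical f) (hs : EventuallyStrongMono f)
    {q : ι → ℝ} (hq : Function.IsFixedPt f q) (p : ι → ℝ) :
    ∃ c : ℝ, Tendsto (fun k => f^[k] p) atTop (𝓝 (q + fun _ => c)) := by
  cases nonempty_fintype ι
  have hlip := hf.lipschitzWith
  obtain ⟨N, hN⟩ := hs
  obtain ⟨r, φ, hφ, hr⟩ := exists_tendsto_subseq_iterate hlip hq p
  have hdist : dist (f^[N] r) q = dist r q :=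
    apply_iterate_eq_of_tendsto_subseq hlip.continuous (V := fun p => dist p q) (by fun_prop)
      (fun p => by simpa [hq.eq] using hlip.dist_le_mul p q) hφ hr N
  obtain ⟨c, rfl⟩ := (hf.iterate N).eq_add_const_of_dist_eq hN
    (by rwa [(hq.iterate N).eq] : dist (f^[N] r) (f^[N] q) = dist r q)
  exact ⟨c, tendsto_iterate_of_tendsto_subseq hlip (hf.isFixedPt_add_const hq c) hφ hr⟩

end IsTopical

end Topical

section LogSumExp

variable {ι : Type*} [Fintype ι] {w : ι → ℝ}

/-- The logarithm of the exponential sum with weights `w`, which are meant to be nonnegative and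
not all zero: for `w = 0` it is the junk value `log 0 = 0`. -/
noncomputable def logSumExp (w x : ι → ℝ) : ℝ :=
  Real.log (∑ i, w i * Real.exp (x i))

lemma sum_mul_exp_pos (hw : 0 < w) (x : ι → ℝ) : 0 < ∑ i, w i * Real.exp (x i) := by
  obtain ⟨hw0, i, hi⟩ := Pi.lt_def.1 hw
  exact Finset.sum_pos' (fun j _ => mul_nonneg (hw0 j) (Real.exp_pos _).le)
    ⟨i, Finset.mem_univ i, mul_pos hi (Real.exp_pos _)⟩

lemma exp_logSumExp (hw : 0 < w) (x : ι → ℝ) :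
    Real.exp (logSumExp w x) = ∑ i, w i * Real.exp (x i) :=
  Real.exp_log (sum_mul_exp_pos hw x)

lemma logSumExp_add_const (hw : 0 < w) (x : ι → ℝ) (c : ℝ) :
    logSumExp w (x + fun _ => c) = logSumExp w x + c := by
  apply Real.exp_injective
  simp only [Real.exp_add, exp_logSumExp hw, Pi.add_apply, Finset.sum_mul, mul_assoc]

lemma logSumExp_mono (hw : 0 < w) : Monotone (logSumExp w) := fun x _ hxy =>
  Real.log_le_log (sum_mul_exp_pos hw x) <| Finset.sum_le_sum fun i _ =>
    mul_le_mul_of_nonneg_left (Real.exp_le_exp.2 (hxy i)) (hw.le i)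

lemma logSumExp_lt (hw : 0 ≤ w) {x y : ι → ℝ} (hxy : x ≤ y) {i : ι} (hwi : 0 < w i)
    (hi : x i < y i) : logSumExp w x < logSumExp w y :=
  Real.log_lt_log (sum_mul_exp_pos (Pi.lt_def.2 ⟨hw, i, hwi⟩) x) <|
    Finset.sum_lt_sum
      (fun j _ => mul_le_mul_of_nonneg_left (Real.exp_le_exp.2 (hxy j)) (hw j))
      ⟨i, Finset.mem_univ i, mul_lt_mul_of_pos_left (Real.exp_lt_exp.2 hi) hwi⟩

end LogSumExp

section NonnegativeMatrices

variable {l m n : Type*}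

lemma exists_pos_of_ne_zero {A : Matrix m n ℝ} (hA : ∀ i j, 0 ≤ A i j) (hA0 : A ≠ 0) :
    ∃ i j, 0 < A i j := by
  by_contra! hle
  exact hA0 (Matrix.ext fun i j => (hle i j).antisymm (hA i j))

variable [Fintype m] {P : Matrix l m ℝ} {Q : Matrix m n ℝ}

lemma mul_apply_pos (hP : ∀ i k, 0 ≤ P i k) (hQ : ∀ k j, 0 ≤ Q k j) {i : l} {j : n} (k : m)
    (hik : 0 < P i k) (hkj : 0 < Q k j) : 0 < (P * Q) i j :=
  Finset.sum_pos' (fun x _ => mul_nonneg (hP i x) (hQ x j))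
    ⟨k, Finset.mem_univ k, mul_pos hik hkj⟩

lemma exists_pos_of_mul_apply_pos (hP : ∀ i k, 0 ≤ P i k) (hQ : ∀ k j, 0 ≤ Q k j) {i : l}
    {j : n} (h : 0 < (P * Q) i j) : ∃ k, 0 < P i k ∧ 0 < Q k j := by
  obtain ⟨k, -, hk⟩ :=
    (Finset.sum_pos_iff_of_nonneg fun x _ => mul_nonneg (hP i x) (hQ x j)).1 h
  exact ⟨k, pos_of_mul_pos_left hk (hQ k j), pos_of_mul_pos_right hk (hP i k)⟩

lemma col_pos_of_isIrreducible {ι : Type*} {M : Matrix ι ι ℝ} (hM : M.IsIrreducible) (j : ι) :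
    0 < M.col j := by
  let : Quiver ι := M.toQuiver
  obtain ⟨path, hpath⟩ := hM.connected j j
  obtain ⟨i, -, edge, -⟩ := (Quiver.Path.length_ne_zero_iff_eq_cons path).1 hpath.ne'
  exact Pi.lt_def.2 ⟨fun i => hM.nonneg i j, i, edge.down⟩

lemma row_pos_of_isIrreducible {ι : Type*} {M : Matrix ι ι ℝ} (hM : M.IsIrreducible) (i : ι) :
    0 < M.row i :=
  col_pos_of_isIrreducible hM.transpose i

lemma isPrimitive_of_hub {ι : Type*} [Fintype ι] [DecidableEq ι] {M : Matrix ι ι ℝ}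
    (hM : ∀ i j, 0 ≤ M i j) {l : ι} (hin : ∀ i, i ≠ l → 0 < M i l)
    (hout : ∀ j, j ≠ l → 0 < M l j) {u v : ι} (hu : u ≠ l) (hv : v ≠ l) (huv : 0 < M u v) :
    M.IsPrimitive := by
  have hM2 : ∀ i j, 0 ≤ (M * M) i j := fun i j =>
    Finset.sum_nonneg fun k _ => mul_nonneg (hM i k) (hM k j)
  have hoff : ∀ i j, i ≠ l → j ≠ l → 0 < (M * M) i j := fun i j hi hj =>
    mul_apply_pos hM hM l (hin i hi) (hout j hj)
  have hll : 0 < (M * M) l l := mul_apply_pos hM hM u (hout u hu) (hin u hu)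
  have hlv : 0 < (M * M) l v := mul_apply_pos hM hM u (hout u hu) huv
  have hul : 0 < (M * M) u l := mul_apply_pos hM hM v huv (hin v hv)
  refine ⟨hM, 4, by norm_num, fun i j => ?_⟩
  rw [show M ^ 4 = M * M * (M * M) by noncomm_ring]
  by_cases hi : i = l <;> by_cases hj : j = l
  · subst hi hj
    exact mul_apply_pos hM2 hM2 _ hll hll
  · subst hi
    exact mul_apply_pos hM2 hM2 v hlv (hoff v j hv hj)
  · subst hj
    exact mul_apply_pos hM2 hM2 u (hoff i u hi hu) hul
  · exact mul_apply_pos hM2 hM2 u (hoff i u hi hu) (hoff u j hu hj)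

end NonnegativeMatrices

section Balancing

open Matrix Topology

variable {ι : Type*} [Fintype ι] {M : Matrix ι ι ℝ}

/-- The sum of the entries of the rescaled matrix `diag(e ^ p) * M * diag(e ^ (-p))`, the objective
minimized when balancing `M`, i.e. when making its row sums equal to its column sums. -/
noncomputable def balancingCost (M : Matrix ι ι ℝ) (p : ι → ℝ) : ℝ :=
  ∑ i, ∑ j, M i j * Real.exp (p i - p j)

/-- One simultaneous step of the balancing iteration: coordinate `i` of the image is the solution
`x` of `e ^ x * ∑ k, M i k * e ^ (-p k) = e ^ (-x) * ∑ j, M j i * e ^ (p j)`, so that fixed points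
are the `p` for which the rescaled matrix is balanced. The diagonal terms keep the old `p i`. -/
noncomputable def balancingMap (M : Matrix ι ι ℝ) (p : ι → ℝ) (i : ι) : ℝ :=
  (logSumExp (M.col i) p - logSumExp (M.row i) (-p)) / 2

lemma isTopical_balancingMap (hrow : ∀ i, 0 < M.row i) (hcol : ∀ j, 0 < M.col j) :
    IsTopical (balancingMap M) where
  monotone p q hpq i := by
    have h₁ := logSumExp_mono (hcol i) hpq
    have h₂ := logSumExp_mono (hrow i) (neg_le_neg hpq)
    simp only [balancingMap]
    linarith
  map_add_const p c := by
    funext i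
    have hneg : -(p + fun _ => c) = -p + fun _ => -c := neg_add p fun _ => c
    simp only [balancingMap, hneg, logSumExp_add_const (hcol i), logSumExp_add_const (hrow i),
      Pi.add_apply]
    ring

lemma balancingMap_lt (hrow : ∀ i, 0 < M.row i) (hcol : ∀ j, 0 < M.col j) {p q : ι → ℝ}
    (hpq : p ≤ q) {i j : ι} (hij : 0 < (M + Mᵀ) i j) (hj : p j < q j) :
    balancingMap M p i < balancingMap M q i := by
  have hneg : -q ≤ -p := neg_le_neg hpq
  have hcol_le := logSumExp_mono (hcol i) hpq
  have hrow_le := logSumExp_mono (hrow i) hneg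
  simp only [balancingMap]
  have hedge : 0 < M i j ∨ 0 < M j i :=
    lt_or_lt_of_add_lt_add (by rwa [add_zero] : 0 + 0 < M i j + M j i)
  rcases hedge with hij | hji
  · have := logSumExp_lt (hrow i).le hneg hij (neg_lt_neg hj)
    linarith
  · have := logSumExp_lt (hcol i).le hpq hji hj
    linarith

lemma iterate_balancingMap_lt [DecidableEq ι] (hrow : ∀ i, 0 < M.row i)
    (hcol : ∀ j, 0 < M.col j) {p q : ι → ℝ} (hpq : p ≤ q) {j : ι}
    (hj : p j < q j) (k : ℕ) :
    ∀ i, 0 < ((M + Mᵀ) ^ k) i j → (balancingMap M)^[k] p i < (balancingMap M)^[k] q i := by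
  have hS : ∀ i j, 0 ≤ (M + Mᵀ) i j := fun i j =>
    add_nonneg ((hrow i).le j) ((hrow j).le i)
  induction k with
  | zero =>
    intro i hi
    obtain rfl : i = j := by
      by_contra hne
      simp [Matrix.one_apply_ne hne] at hi
    exact hj
  | succ k ih =>
    intro i hi
    rw [pow_succ'] at hi
    obtain ⟨x, hix, hxj⟩ := exists_pos_of_mul_apply_pos hS (Matrix.pow_apply_nonneg hS k) hi
    simp only [Function.iterate_succ_apply']
    exact balancingMap_lt hrow hcol
      ((isTopical_balancingMap hrow hcol).monotone.iterate k hpq) hix (ih x hxj)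

lemma eventuallyStrongMono_balancingMap [DecidableEq ι] (hrow : ∀ i, 0 < M.row i)
    (hcol : ∀ j, 0 < M.col j) (hS : (M + Mᵀ).IsPrimitive) :
    EventuallyStrongMono (balancingMap M) := by
  obtain ⟨k, -, hk⟩ := hS.exists_pos_pow
  refine ⟨k, fun p q hpq i => ?_⟩
  obtain ⟨hle, j, hj⟩ := Pi.lt_def.1 hpq
  exact iterate_balancingMap_lt hrow hcol hle hj k i (hk i j)

lemma balancingCost_add_const (M : Matrix ι ι ℝ) (p : ι → ℝ) (c : ℝ) :
    balancingCost M (p + fun _ => c) = balancingCost M p := by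
  simp only [balancingCost, Pi.add_apply, add_sub_add_right_eq_sub]

lemma hasDerivAt_balancingCost_update [DecidableEq ι] (M : Matrix ι ι ℝ) (p : ι → ℝ) (k : ι) :
    HasDerivAt (fun x => balancingCost M (Function.update p k x))
      ((∑ j, M k j * Real.exp (p k - p j)) - ∑ i, M i k * Real.exp (p i - p k)) (p k) := by
  have hcoord : ∀ i, HasDerivAt (fun x => Function.update p k x i)
      ((Pi.single k 1 : ι → ℝ) i) (p k) := hasDerivAt_pi.1 (hasDerivAt_update p k (p k))
  have hsum : HasDerivAt (fun x => balancingCost M (Function.update p k x))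
      (∑ i, ∑ j, M i j * (Real.exp (p i - p j) *
        ((Pi.single k 1 : ι → ℝ) i - (Pi.single k 1 : ι → ℝ) j))) (p k) := by
    refine HasDerivAt.fun_sum fun i _ => HasDerivAt.fun_sum fun j _ => HasDerivAt.const_mul _ ?_
    simpa only [Function.update_eq_self] using ((hcoord i).fun_sub (hcoord j)).exp
  convert hsum using 1
  simp only [mul_sub, Finset.sum_sub_distrib]
  rw [Finset.sum_comm (f := fun i j => M i j * (Real.exp (p i - p j) * (Pi.single k 1 : ι → ℝ) j))]
  simp [Pi.single_apply]

lemma isFixedPt_balancingMap_of_forall_le (hrow : ∀ i, 0 < M.row i) (hcol : ∀ j, 0 < M.col j)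
    {p : ι → ℝ} (hp : ∀ q, balancingCost M p ≤ balancingCost M q) :
    Function.IsFixedPt (balancingMap M) p := by
  classical
  funext k
  have hmin : IsLocalMin (fun x => balancingCost M (Function.update p k x)) (p k) :=
    Eventually.of_forall fun x => by simpa only [Function.update_eq_self] using hp _
  have hbalanced : ∑ j, M k j * Real.exp (p k - p j) = ∑ i, M i k * Real.exp (p i - p k) :=
    sub_eq_zero.1 (hmin.hasDerivAt_eq_zero (hasDerivAt_balancingCost_update M p k))
  have hrow_k : ∑ j, M k j * Real.exp (p k - p j)
      = Real.exp (logSumExp (M.row k) (-p) + p k) := by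
    rw [← logSumExp_add_const (hrow k), exp_logSumExp (hrow k)]
    simp [Matrix.row, neg_add_eq_sub]
  have hcol_k : ∑ i, M i k * Real.exp (p i - p k)
      = Real.exp (logSumExp (M.col k) p + -p k) := by
    rw [← logSumExp_add_const (hcol k), exp_logSumExp (hcol k)]
    simp [Matrix.col, sub_eq_add_neg]
  have hlog := Real.exp_injective (hrow_k.symm.trans (hbalanced.trans hcol_k))
  simp only [balancingMap]
  linarith

lemma mul_exp_le_balancingCost (hM : ∀ i j, 0 ≤ M i j) (p : ι → ℝ) (i j : ι) :
    M i j * Real.exp (p i - p j) ≤ balancingCost M p := by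
  have hterm : ∀ i j, 0 ≤ M i j * Real.exp (p i - p j) := fun i j =>
    mul_nonneg (hM i j) (Real.exp_pos _).le
  calc M i j * Real.exp (p i - p j)
      ≤ ∑ j, M i j * Real.exp (p i - p j) :=
        Finset.single_le_sum (fun j _ => hterm i j) (Finset.mem_univ j)
    _ ≤ balancingCost M p :=
        Finset.single_le_sum (f := fun i => ∑ j, M i j * Real.exp (p i - p j))
          (fun i _ => Finset.sum_nonneg fun j _ => hterm i j) (Finset.mem_univ i)

-- Each positive entry bounds one difference; these bounds add up along a path from `i` to `j`.
lemma exists_sub_le_of_balancingCost_le (hM : M.IsIrreducible) (C : ℝ) (i j : ι) :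
    ∃ B, ∀ p, balancingCost M p ≤ C → p i - p j ≤ B := by
  let : Quiver ι := M.toQuiver
  obtain ⟨path, -⟩ := hM.connected i j
  induction path with
  | nil => exact ⟨0, fun p _ => (sub_self _).le⟩
  | @cons k j _ edge ih =>
    obtain ⟨B, hB⟩ := ih
    refine ⟨B + C / M k j, fun p hp => ?_⟩
    have hedge : p k - p j ≤ C / M k j :=
      calc p k - p j ≤ Real.exp (p k - p j) := by linarith [Real.add_one_le_exp (p k - p j)]
        _ ≤ C / M k j :=
          (le_div_iff₀' edge.down).2 ((mul_exp_le_balancingCost hM.nonneg p k j).trans hp)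
    linarith [hB p hp]

lemma exists_forall_balancingCost_le [Nonempty ι] (hM : M.IsIrreducible) :
    ∃ p, ∀ q, balancingCost M p ≤ balancingCost M q := by
  obtain ⟨l⟩ := ‹Nonempty ι›
  choose B hB using exists_sub_le_of_balancingCost_le hM (balancingCost M 0)
  let K : Set (ι → ℝ) := Set.univ.pi fun i => Set.Icc (-B l i) (B i l)
  have hK : ∀ q : ι → ℝ, q l = 0 → balancingCost M q ≤ balancingCost M 0 → q ∈ K :=
    fun q hql hq i _ =>
      ⟨by linarith [hB l i q hq], by linarith [hB i l q hq]⟩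
  have hcont : Continuous (balancingCost M) := by
    unfold balancingCost
    fun_prop
  have h0 : (0 : ι → ℝ) ∈ K := hK 0 rfl le_rfl
  obtain ⟨p, -, hp⟩ :=
    (isCompact_univ_pi fun i => isCompact_Icc).exists_isMinOn ⟨0, h0⟩ hcont.continuousOn
  refine ⟨p, fun q => ?_⟩
  rw [← balancingCost_add_const M q (-q l)]
  rcases le_total (balancingCost M (q + fun _ => -q l)) (balancingCost M 0) with hq | hq
  · exact hp (hK _ (add_neg_cancel (q l)) hq)
  · exact (hp h0).trans hq

theorem balancingMap_iteration_converges [Nonempty ι] [DecidableEq ι] (hM : M.IsIrreducible)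
    (hS : (M + Mᵀ).IsPrimitive) :
    ∃ pstar : ι → ℝ,
      (∀ q, balancingCost M pstar ≤ balancingCost M q) ∧
      (∀ q : ι → ℝ, (∀ r, balancingCost M q ≤ balancingCost M r) ↔
        ∃ c : ℝ, q = pstar + fun _ => c) ∧
      (∀ p0 : ι → ℝ, ∃ plim : ι → ℝ, (∀ r, balancingCost M plim ≤ balancingCost M r) ∧
        Tendsto (fun k => (balancingMap M)^[k] p0) atTop (𝓝 plim)) := by
  have hrow := row_pos_of_isIrreducible hM
  have hcol := col_pos_of_isIrreducible hM
  have htop := isTopical_balancingMap hrow hcol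
  have hstrong := eventuallyStrongMono_balancingMap hrow hcol hS
  obtain ⟨p, hp⟩ := exists_forall_balancingCost_le hM
  have hfix := isFixedPt_balancingMap_of_forall_le hrow hcol hp
  have htranslate : ∀ c r, balancingCost M (p + fun _ => c) ≤ balancingCost M r := fun c r =>
    (balancingCost_add_const M p c).trans_le (hp r)
  refine ⟨p, hp, fun q => ⟨fun hq => ?_, ?_⟩, fun p0 => ?_⟩
  · exact htop.eq_add_const_of_isFixedPt hstrong
      (isFixedPt_balancingMap_of_forall_le hrow hcol hq) hfix
  · rintro ⟨c, rfl⟩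
    exact htranslate c
  · obtain ⟨c, hc⟩ := htop.exists_tendsto_iterate hstrong hfix p0
    exact ⟨_, htranslate c, hc⟩

end Balancing

section EffectiveMatrix

open Matrix

variable {n : ℕ} (A : Matrix (Fin n) (Fin n) ℝ) (a b : ℝ)

/-- The matrix `[[A, e ^ (-b)], [e ^ a, 0]]` whose balancing problem is the minimization of
`effDual` in `p`; the last index is the additional one. -/
noncomputable def effMatrix : Matrix (Fin (n + 1)) (Fin (n + 1)) ℝ :=
  Fin.snoc (α := fun _ => Fin (n + 1) → ℝ)
    (fun i => Fin.snoc (α := fun _ => ℝ) (A i) (Real.exp (-b)))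
    (Fin.snoc (α := fun _ => ℝ) (fun _ => Real.exp a) 0)

@[simp]
lemma effMatrix_castSucc_castSucc (i j : Fin n) :
    effMatrix A a b i.castSucc j.castSucc = A i j := by
  simp only [effMatrix, Fin.snoc_castSucc]

@[simp]
lemma effMatrix_castSucc_last (i : Fin n) :
    effMatrix A a b i.castSucc (Fin.last n) = Real.exp (-b) := by
  simp only [effMatrix, Fin.snoc_castSucc, Fin.snoc_last]

@[simp]
lemma effMatrix_last_castSucc (j : Fin n) :
    effMatrix A a b (Fin.last n) j.castSucc = Real.exp a := by
  simp only [effMatrix, Fin.snoc_castSucc, Fin.snoc_last]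

@[simp]
lemma effMatrix_last_last : effMatrix A a b (Fin.last n) (Fin.last n) = 0 := by
  simp only [effMatrix, Fin.snoc_last]

lemma fLam_eq_balancingMap : fLam A a b = balancingMap (effMatrix A a b) := by
  funext p i
  cases i using Fin.lastCases <;>
    simp [fLam, balancingMap, logSumExp, Matrix.row, Matrix.col, Fin.sum_univ_castSucc,
      ← Real.exp_add, sub_eq_add_neg] <;> ring

lemma effDual_eq_balancingCost (α : ℝ) (p : Fin (n + 1) → ℝ) (μ : ℝ) :
    effDual A α p μ a b = Real.exp μ * balancingCost (effMatrix A a b) p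
      + (-(1 - α) * a - μ + (1 - α) * b) := by
  have hinner : ∀ i j : Fin n, A i j * Real.exp (p i.castSucc - p j.castSucc + μ)
      = Real.exp μ * (A i j * Real.exp (p i.castSucc - p j.castSucc)) := fun i j => by
    rw [Real.exp_add]; ring
  have hlast_col : ∀ i : Fin n, Real.exp (-b - p (Fin.last n) + p i.castSucc + μ)
      = Real.exp μ * (Real.exp (-b) * Real.exp (p i.castSucc - p (Fin.last n))) := fun i => by
    rw [← Real.exp_add, ← Real.exp_add]; ring_nf
  have hlast_row : ∀ j : Fin n, Real.exp (a + p (Fin.last n) - p j.castSucc + μ)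
      = Real.exp μ * (Real.exp a * Real.exp (p (Fin.last n) - p j.castSucc)) := fun j => by
    rw [← Real.exp_add, ← Real.exp_add]; ring_nf
  simp only [effDual, balancingCost, hinner, hlast_col, hlast_row, Fin.sum_univ_castSucc,
    effMatrix_castSucc_castSucc, effMatrix_castSucc_last, effMatrix_last_castSucc,
    effMatrix_last_last, ← Finset.mul_sum, Finset.sum_add_distrib]
  ring

lemma effDual_le_effDual_iff (α : ℝ) (p q : Fin (n + 1) → ℝ) (μ : ℝ) :
    effDual A α p μ a b ≤ effDual A α q μ a b ↔
      balancingCost (effMatrix A a b) p ≤ balancingCost (effMatrix A a b) q := by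
  rw [effDual_eq_balancingCost, effDual_eq_balancingCost, add_le_add_iff_right,
    mul_le_mul_iff_right₀ (Real.exp_pos μ)]

variable {A}

lemma effMatrix_nonneg (hA : ∀ i j, 0 ≤ A i j) (i j : Fin (n + 1)) :
    0 ≤ effMatrix A a b i j := by
  cases i using Fin.lastCases <;> cases j using Fin.lastCases <;>
    simp [hA, Real.exp_nonneg]

lemma effMatrix_apply_last_pos {i : Fin (n + 1)} (hi : i ≠ Fin.last n) :
    0 < effMatrix A a b i (Fin.last n) := by
  obtain ⟨i, rfl⟩ := Fin.exists_castSucc_eq.2 hi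
  simp [Real.exp_pos]

lemma effMatrix_last_apply_pos {j : Fin (n + 1)} (hj : j ≠ Fin.last n) :
    0 < effMatrix A a b (Fin.last n) j := by
  obtain ⟨j, rfl⟩ := Fin.exists_castSucc_eq.2 hj
  simp [Real.exp_pos]

variable {u v : Fin n}

lemma isPrimitive_effMatrix (hA : ∀ i j, 0 ≤ A i j) (huv : 0 < A u v) :
    (effMatrix A a b).IsPrimitive :=
  isPrimitive_of_hub (effMatrix_nonneg a b hA) (fun _ => effMatrix_apply_last_pos a b)
    (fun _ => effMatrix_last_apply_pos a b) (Fin.castSucc_ne_last u) (Fin.castSucc_ne_last v)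
    (by simpa only [effMatrix_castSucc_castSucc] using huv)

lemma isPrimitive_effMatrix_add_transpose (hA : ∀ i j, 0 ≤ A i j) (huv : 0 < A u v) :
    (effMatrix A a b + (effMatrix A a b)ᵀ).IsPrimitive := by
  have hnonneg := effMatrix_nonneg a b hA
  have hedge : 0 < effMatrix A a b u.castSucc v.castSucc := by
    simpa only [effMatrix_castSucc_castSucc] using huv
  exact isPrimitive_of_hub (fun i j => add_nonneg (hnonneg i j) (hnonneg j i))
    (fun i hi => add_pos (effMatrix_apply_last_pos a b hi) (effMatrix_last_apply_pos a b hi))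
    (fun j hj => add_pos (effMatrix_last_apply_pos a b hj) (effMatrix_apply_last_pos a b hj))
    (Fin.castSucc_ne_last u) (Fin.castSucc_ne_last v)
    (add_pos_of_pos_of_nonneg hedge (hnonneg _ _))

end EffectiveMatrix

theorem fLam_iteration_converges_general {n : ℕ} (A : Matrix (Fin n) (Fin n) ℝ)
    (hA : ∀ i j, 0 ≤ A i j) (hA0 : A ≠ 0) (α μ a b : ℝ) :
    ∃ pstar : Fin (n + 1) → ℝ,
      (∀ q, effDual A α pstar μ a b ≤ effDual A α q μ a b) ∧
      (∀ q : Fin (n + 1) → ℝ,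
        (∀ r, effDual A α q μ a b ≤ effDual A α r μ a b) ↔
          ∃ c : ℝ, q = pstar + fun _ => c) ∧
      (∀ p0 : Fin (n + 1) → ℝ, ∃ plim : Fin (n + 1) → ℝ,
        (∀ r, effDual A α plim μ a b ≤ effDual A α r μ a b) ∧
        Tendsto (fun k => (fLam A a b)^[k] p0) atTop (nhds plim)) := by
  obtain ⟨u, v, huv⟩ := exists_pos_of_ne_zero hA hA0
  simp only [effDual_le_effDual_iff, fLam_eq_balancingMap]
  exact balancingMap_iteration_converges (isPrimitive_effMatrix a b hA huv).isIrreducible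
    (isPrimitive_effMatrix_add_transpose a b hA huv)

/-- For any fixed multipliers `(μ, a, b)`, if `A ≠ 0` then the iterates of `f^λ` converge to
a global minimizer of `p ↦ θ(p, μ, a, b)`; the set of minimizers is nonempty and consists
exactly of the translates `p* + c𝟙` of any one minimizer `p*`. -/
theorem fLam_iteration_converges {n : ℕ} (A : Matrix (Fin n) (Fin n) ℝ)
    (hA : ∀ i j, 0 ≤ A i j) (hA0 : A ≠ 0) (α : ℝ) (hα₁ : 1 / 2 < α) (hα₂ : α < 1)
    (μ a b : ℝ) :
    ∃ pstar : Fin (n + 1) → ℝ,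
      (∀ q, effDual A α pstar μ a b ≤ effDual A α q μ a b) ∧
      (∀ q : Fin (n + 1) → ℝ,
        (∀ r, effDual A α q μ a b ≤ effDual A α r μ a b) ↔
          ∃ c : ℝ, q = pstar + fun _ => c) ∧
      (∀ p0 : Fin (n + 1) → ℝ, ∃ plim : Fin (n + 1) → ℝ,
        (∀ r, effDual A α plim μ a b ≤ effDual A α r μ a b) ∧
        Tendsto (fun k => (fLam A a b)^[k] p0) atTop (nhds plim)) :=
  fLam_iteration_converges_general A hA hA0 α μ a b
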